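/- arXiv:2511.16629 — 4 statements merged into one kernel-verified Lean document; each statement's English description precedes it below -/
import Mathlib

section
/- Let H be a finite-dimensional real inner product space, A a nonempty finite type, and φ : A → H with ‖φ(b)‖ ≤ 1 for all b ∈ A. Fix a ∈ A and define f : H → ℝ by f(θ) = −⟪φ(a), θ⟫ − log(∑_{b ∈ A} exp(−⟪φ(b), θ⟫)). Then for every θ ∈ H, the gradient of f at θ has norm at most 2. -/
open Real RealInnerProductSpace Finset

/-!
The score function of the softmax policy is `∇ log π_θ(a) = 𝔼_{b ∼ π_θ} φ b − φ a`. The expectation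
is a convex combination of the features, so it lies in every ball centred at `φ a` that contains
them all.
-/

theorem norm_centerMass_sub_le {ι E : Type*} [SeminormedAddCommGroup E] [NormedSpace ℝ E]
    {s : Finset ι} {w : ι → ℝ} {z : ι → E} {c : E} {r : ℝ} (hw : ∀ i ∈ s, 0 ≤ w i)
    (hw_sum : 0 < ∑ i ∈ s, w i) (hz : ∀ i ∈ s, ‖z i - c‖ ≤ r) :
    ‖s.centerMass w z - c‖ ≤ r :=
  mem_closedBall_iff_norm.mp <| (convex_closedBall c r).centerMass_mem hw hw_sum fun i hi =>
    mem_closedBall_iff_norm.mpr (hz i hi)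

theorem sum_exp_pos {ι : Type*} {s : Finset ι} (hs : s.Nonempty) (u : ι → ℝ) :
    0 < ∑ i ∈ s, exp (u i) :=
  sum_pos (fun i _ => exp_pos (u i)) hs

theorem hasFDerivAt_log_sum_exp {ι E : Type*} [NormedAddCommGroup E] [NormedSpace ℝ E]
    {s : Finset ι} (hs : s.Nonempty) {u : ι → E → ℝ} {u' : ι → StrongDual ℝ E} {x : E}
    (hu : ∀ i ∈ s, HasFDerivAt (u i) (u' i) x) :
    HasFDerivAt (fun y => log (∑ i ∈ s, exp (u i y))) (s.centerMass (fun i => exp (u i x)) u') x :=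
  (HasFDerivAt.fun_sum fun i hi => (hu i hi).exp).log (sum_exp_pos hs fun i => u i x).ne'

theorem hasGradientAt_sub {𝕜 F : Type*} [RCLike 𝕜] [NormedAddCommGroup F] [InnerProductSpace 𝕜 F]
    [CompleteSpace F] {f g : F → 𝕜} {f' g' x : F} (hf : HasGradientAt f f' x)
    (hg : HasGradientAt g g' x) : HasGradientAt (fun y => f y - g y) (f' - g') x := by
  rw [hasGradientAt_iff_hasFDerivAt, map_sub]
  exact hf.hasFDerivAt.sub hg.hasFDerivAt

section Softmax

variable {ι H : Type*} [NormedAddCommGroup H] [InnerProductSpace ℝ H] [CompleteSpace H]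

theorem hasGradientAt_log_sum_exp {s : Finset ι} (hs : s.Nonempty) {u : ι → H → ℝ} {g : ι → H}
    {x : H} (hu : ∀ i ∈ s, HasGradientAt (u i) (g i) x) :
    HasGradientAt (fun y => log (∑ i ∈ s, exp (u i y)))
      (s.centerMass (fun i => exp (u i x)) g) x := by
  rw [hasGradientAt_iff_hasFDerivAt]
  simpa only [centerMass, map_smulₛₗ, map_sum, conj_trivial] using
    hasFDerivAt_log_sum_exp hs fun i hi => (hu i hi).hasFDerivAt

theorem hasGradientAt_neg_inner (v x : H) : HasGradientAt (fun y => -⟪v, y⟫) (-v) x := by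
  rw [hasGradientAt_iff_hasFDerivAt, map_neg]
  exact (InnerProductSpace.toDual ℝ H v).hasFDerivAt.neg

theorem hasGradientAt_log_softmax {s : Finset ι} (hs : s.Nonempty) (φ : ι → H) (a : ι) (θ : H) :
    HasGradientAt (fun θ => -⟪φ a, θ⟫ - log (∑ b ∈ s, exp (-⟪φ b, θ⟫)))
      (s.centerMass (fun b => exp (-⟪φ b, θ⟫)) φ - φ a) θ := by
  have h_logit := hasGradientAt_neg_inner (φ a) θ
  have h_normalizer := hasGradientAt_log_sum_exp hs fun b _ => hasGradientAt_neg_inner (φ b) θ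
  simpa only [centerMass, smul_neg, sum_neg_distrib, neg_sub_neg] using
    hasGradientAt_sub h_logit h_normalizer

end Softmax

theorem gradient_log_softmax_norm_le_two_general
    {H : Type*} [NormedAddCommGroup H] [InnerProductSpace ℝ H] [CompleteSpace H]
    {A : Type*} [Fintype A] (φ : A → H) (a : A) {r : ℝ} (hφ : ∀ b, ‖φ b - φ a‖ ≤ r)
    (f : H → ℝ)
    (hf : f = fun θ => -⟪φ a, θ⟫ - log (∑ b, exp (-⟪φ b, θ⟫))) :
    ∀ θ : H, ‖gradient f θ‖ ≤ r := by
  intro θ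
  have hA : (univ : Finset A).Nonempty := ⟨a, mem_univ a⟩
  rw [hf, (hasGradientAt_log_softmax hA φ a θ).gradient]
  exact norm_centerMass_sub_le (fun b _ => (exp_pos _).le) (sum_exp_pos hA _) fun b _ => hφ b

/-- **Bounded score function of the softmax policy**: if the feature vectors satisfy
`‖φ b‖ ≤ 1`, then the gradient of the log-softmax
`f θ = −⟪φ a, θ⟫ − log ∑_b exp(−⟪φ b, θ⟫)` has norm at most `2` everywhere. -/
theorem gradient_log_softmax_norm_le_two
    {H : Type*} [NormedAddCommGroup H] [InnerProductSpace ℝ H] [FiniteDimensional ℝ H]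
    {A : Type*} [Fintype A] [Nonempty A]
    (φ : A → H) (hφ : ∀ b, ‖φ b‖ ≤ 1) (a : A)
    (f : H → ℝ)
    (hf : f = fun θ => -⟪φ a, θ⟫ - Real.log (∑ b, Real.exp (-⟪φ b, θ⟫))) :
    ∀ θ : H, ‖gradient f θ‖ ≤ 2 :=
  gradient_log_softmax_norm_le_two_general φ a
    (fun b => (norm_sub_le_of_le (hφ b) (hφ a)).trans_eq one_add_one_eq_two) f hf
end

section
/- Let H be a real inner product space (finite-dimensional), and let V, e : H → ℝ be differentiable functions such that Ṽ := V + e has a gradient that is Lipschitz continuous with constant L ≥ 0, and such that |e(θ)| ≤ ε and ‖∇e(θ)‖ ≤ ε for all θ ∈ H, where ε ≥ 0. Let (Ω, μ) be a probability space, θ₀ ∈ H, η ≥ 0, and let G : Ω → H be measurable with ∫ G dμ = ∇V(θ₀) and ‖G(ω)‖ ≤ G_max almost everywhere. Let Θ' : Ω → H be measurable with V ∘ Θ' integrable and Ṽ(Θ'(ω)) ≥ Ṽ(θ₀ + η • G(ω)) for almost every ω. Then ∫ V(Θ'(ω)) dμ(ω) ≥ V(θ₀) + η ‖∇V(θ₀)‖²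 − (L/2) η² ∫ ‖G(ω)‖² dμ(ω) − 2ε − η ε ‖∇V(θ₀)‖. -/
open MeasureTheory Real

/-! The critic's objective `V + e` is smooth, so along `θ₀ + η • G` it stays above its tangent plane
up to a quadratic error, and the Lookback rule passes this lower bound on to `Θ'`. Taking
expectations turns the linear term into `η * ⟪∇V + ∇e, ∇V⟫`, in which the first-order bias costs at
most `ε * ‖∇V‖`; replacing `V + e` by `V` at the two points `θ₀` and `Θ'` costs `ε` each time. -/

section Smooth

variable {E F : Type*} [NormedAddCommGroup E] [NormedSpace ℝ E] [NormedAddCommGroup F]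
  [NormedSpace ℝ F]

theorem norm_sub_sub_le_of_hasFDerivWithinAt_of_norm_sub_le {s : Set E} {f : E → F}
    {f' : E → E →L[ℝ] F} {x y : E} {C : ℝ} (hs : StarConvex ℝ x s)
    (hf : ∀ z ∈ s, HasFDerivWithinAt f (f' z) s z)
    (hC : ∀ z ∈ s, ‖f' z - f' x‖ ≤ C * ‖z - x‖) (hy : y ∈ s) :
    ‖f y - f x - f' x (y - x)‖ ≤ C / 2 * ‖y - x‖ ^ 2 := by
  set v := y - x with hv
  have hmem : ∀ t ∈ Set.Icc (0 : ℝ) 1, x + t • v ∈ s := fun t ht =>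
    hs.add_smul_sub_mem hy ht.1 ht.2
  let remainder : ℝ → F := fun t => f (x + t • v) - f x - t • f' x v
  have hderiv : ∀ t ∈ Set.Icc (0 : ℝ) 1, HasDerivWithinAt remainder
      ((f' (x + t • v) - f' x) v) (Set.Icc 0 1) t := by
    intro t ht
    have hpath : HasDerivWithinAt (fun t : ℝ => x + t • v) v (Set.Icc 0 1) t := by
      simpa using (((hasDerivAt_id t).smul_const v).const_add x).hasDerivWithinAt
    simpa using (((hf _ (hmem t ht)).comp_hasDerivWithinAt t hpath hmem).sub_const (f x)).fun_sub
      ((hasDerivWithinAt_id t _).smul_const (f' x v))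
  have hbound : ∀ t ∈ Set.Ico (0 : ℝ) 1, ‖(f' (x + t • v) - f' x) v‖ ≤ C * ‖v‖ ^ 2 * t := by
    intro t ht
    calc ‖(f' (x + t • v) - f' x) v‖ ≤ ‖f' (x + t • v) - f' x‖ * ‖v‖ :=
          ContinuousLinearMap.le_opNorm _ _
      _ ≤ C * ‖x + t • v - x‖ * ‖v‖ := by
          gcongr
          exact hC _ (hmem t (Set.Ico_subset_Icc_self ht))
      _ = C * ‖v‖ ^ 2 * t := by
          rw [add_sub_cancel_left, norm_smul_of_nonneg ht.1]
          ring
  have hparabola : ∀ t : ℝ, HasDerivAt (fun t => C / 2 * ‖v‖ ^ 2 * t ^ 2) (C * ‖v‖ ^ 2 * t) t :=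
    fun t => ((hasDerivAt_pow 2 t).const_mul _).congr_deriv (by push_cast; ring)
  have hremainder : ‖remainder 1‖ ≤ C / 2 * ‖v‖ ^ 2 * 1 ^ 2 :=
    image_norm_le_of_norm_deriv_right_le_deriv_boundary
      (fun t ht => (hderiv t ht).continuousWithinAt)
      (fun t ht => (hderiv t (Set.Ico_subset_Icc_self ht)).mono_of_mem_nhdsWithin
        (Icc_mem_nhdsGE_of_mem ht))
      (by simp [remainder]) hparabola hbound (Set.right_mem_Icc.2 zero_le_one)
  simpa [remainder, hv] using hremainder

end Smooth

section Gradient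

theorem gradient_fun_add {𝕜 H : Type*} [RCLike 𝕜] [NormedAddCommGroup H] [InnerProductSpace 𝕜 H]
    [CompleteSpace H] {f g : H → 𝕜} {x : H} (hf : DifferentiableAt 𝕜 f x)
    (hg : DifferentiableAt 𝕜 g x) :
    gradient (fun y => f y + g y) x = gradient f x + gradient g x := by
  simp only [gradient, fderiv_fun_add hf hg, map_add]

variable {H : Type*} [NormedAddCommGroup H] [InnerProductSpace ℝ H]

theorem norm_sq_sub_mul_norm_le_inner_add_left {v b : H} {δ : ℝ} (hb : ‖b‖ ≤ δ) :
    ‖v‖ ^ 2 - δ * ‖v‖ ≤ inner ℝ (v + b) v := by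
  have hinner : -(δ * ‖v‖) ≤ inner ℝ b v :=
    neg_le_of_abs_le ((abs_real_inner_le_norm b v).trans (by gcongr))
  rw [inner_add_left, real_inner_self_eq_norm_sq]
  linarith

variable [CompleteSpace H]

theorem abs_sub_sub_inner_le_of_hasGradientWithinAt_of_norm_sub_le {s : Set H} {f : H → ℝ}
    {f' : H → H} {x y : H} {C : ℝ} (hs : StarConvex ℝ x s)
    (hf : ∀ z ∈ s, HasGradientWithinAt f (f' z) s z)
    (hC : ∀ z ∈ s, ‖f' z - f' x‖ ≤ C * ‖z - x‖) (hy : y ∈ s) :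
    |f y - f x - inner ℝ (f' x) (y - x)| ≤ C / 2 * ‖y - x‖ ^ 2 := by
  have hdual : ∀ z ∈ s, ‖InnerProductSpace.toDual ℝ H (f' z) - InnerProductSpace.toDual ℝ H (f' x)‖
      ≤ C * ‖z - x‖ := by
    simpa only [← map_sub, LinearIsometryEquiv.norm_map] using hC
  exact norm_sub_sub_le_of_hasFDerivWithinAt_of_norm_sub_le hs
    (fun z hz => (hf z hz).hasFDerivWithinAt) hdual hy

variable {Ω : Type*} [MeasurableSpace Ω] {μ : Measure Ω} [IsProbabilityMeasure μ]

/- `Z` is kept separate from `f (x + η • G)` so that it can absorb both the Lookback choice and the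
zeroth-order bias. -/
theorem le_integral_of_ae_comp_add_smul_le {f : H → ℝ} {x : H} {C η : ℝ} {G : Ω → H} {Z : Ω → ℝ}
    (hf : Differentiable ℝ f) (hC : ∀ y, ‖gradient f y - gradient f x‖ ≤ C * ‖y - x‖)
    (hG : MemLp G 2 μ) (hZ : Integrable Z μ) (hfZ : ∀ᵐ ω ∂μ, f (x + η • G ω) ≤ Z ω) :
    f x + η * inner ℝ (gradient f x) (∫ ω, G ω ∂μ) - C / 2 * η ^ 2 * ∫ ω, ‖G ω‖ ^ 2 ∂μ
      ≤ ∫ ω, Z ω ∂μ := by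
  have hGint : Integrable G μ := hG.integrable one_le_two
  have hlin : Integrable (fun ω => η * inner ℝ (gradient f x) (G ω)) μ :=
    (hGint.const_inner _).const_mul η
  have haffine : Integrable (fun ω => f x + η * inner ℝ (gradient f x) (G ω)) μ :=
    (integrable_const _).add hlin
  have hquad : Integrable (fun ω => C / 2 * η ^ 2 * ‖G ω‖ ^ 2) μ :=
    (hG.integrable_norm_pow two_ne_zero).const_mul _
  have hbound : ∀ᵐ ω ∂μ,
      f x + η * inner ℝ (gradient f x) (G ω) - C / 2 * η ^ 2 * ‖G ω‖ ^ 2 ≤ Z ω := by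
    filter_upwards [hfZ] with ω hω
    have htangent := abs_sub_sub_inner_le_of_hasGradientWithinAt_of_norm_sub_le
      (y := x + η • G ω) (starConvex_univ x)
      (fun z _ => hasGradientWithinAt_univ.2 (hf z).hasGradientAt)
      (fun z _ => hC z) (Set.mem_univ _)
    rw [add_sub_cancel_left, inner_smul_right, norm_smul, mul_pow, Real.norm_eq_abs, sq_abs]
      at htangent
    linarith [neg_le_of_abs_le htangent]
  calc f x + η * inner ℝ (gradient f x) (∫ ω, G ω ∂μ) - C / 2 * η ^ 2 * ∫ ω, ‖G ω‖ ^ 2 ∂μ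
      = ∫ ω, (f x + η * inner ℝ (gradient f x) (G ω) - C / 2 * η ^ 2 * ‖G ω‖ ^ 2) ∂μ := by
        rw [integral_sub haffine hquad, integral_add (integrable_const _) hlin,
          integral_const_mul, integral_const_mul, integral_inner hGint, integral_const,
          probReal_univ, one_smul]
    _ ≤ ∫ ω, Z ω ∂μ := integral_mono_ae (haffine.sub hquad) hZ hbound

theorem biased_descent_step_general {V e : H → ℝ} {θ₀ : H} {L η ε₀ ε₁ : ℝ} {G Θ' : Ω → H}
    (hV : DifferentiableAt ℝ V θ₀) (hVe : Differentiable ℝ (fun θ => V θ + e θ))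
    (hLip : ∀ θ, ‖gradient (fun θ => V θ + e θ) θ - gradient (fun θ => V θ + e θ) θ₀‖
      ≤ L * ‖θ - θ₀‖)
    (he₀ : |e θ₀| ≤ ε₀) (heΘ' : ∀ᵐ ω ∂μ, |e (Θ' ω)| ≤ ε₀) (hgrade : ‖gradient e θ₀‖ ≤ ε₁)
    (hη : 0 ≤ η) (hG : MemLp G 2 μ) (hunbiased : ∫ ω, G ω ∂μ = gradient V θ₀)
    (hVint : Integrable (fun ω => V (Θ' ω)) μ)
    (haccept : ∀ᵐ ω ∂μ, V (θ₀ + η • G ω) + e (θ₀ + η • G ω) ≤ V (Θ' ω) + e (Θ' ω)) :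
    V θ₀ + η * ‖gradient V θ₀‖ ^ 2 - L / 2 * η ^ 2 * ∫ ω, ‖G ω‖ ^ 2 ∂μ
        - 2 * ε₀ - η * ε₁ * ‖gradient V θ₀‖
      ≤ ∫ ω, V (Θ' ω) ∂μ := by
  have he : DifferentiableAt ℝ e θ₀ := by simpa using (hVe θ₀).fun_sub hV
  have hbiased : ∀ᵐ ω ∂μ, V (θ₀ + η • G ω) + e (θ₀ + η • G ω) ≤ V (Θ' ω) + ε₀ := by
    filter_upwards [haccept, heΘ'] with ω hω heω
    linarith [le_of_abs_le heω]
  have hdescent : V θ₀ + e θ₀ + η * inner ℝ (gradient V θ₀ + gradient e θ₀) (gradient V θ₀)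
      - L / 2 * η ^ 2 * ∫ ω, ‖G ω‖ ^ 2 ∂μ ≤ ∫ ω, V (Θ' ω) ∂μ + ε₀ := by
    simpa [gradient_fun_add hV he, hunbiased, integral_add hVint (integrable_const ε₀)] using
      le_integral_of_ae_comp_add_smul_le hVe hLip hG (hVint.add (integrable_const ε₀)) hbiased
  have hinner : η * (‖gradient V θ₀‖ ^ 2 - ε₁ * ‖gradient V θ₀‖)
      ≤ η * inner ℝ (gradient V θ₀ + gradient e θ₀) (gradient V θ₀) := by
    gcongr
    exact norm_sq_sub_mul_norm_le_inner_add_left hgrade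
  linarith [neg_le_of_abs_le he₀]

end Gradient

/-- **Biased descent lemma** (actor–critic): `V` is the true objective, `e` the critic's
bias with `|e| ≤ ε` and `‖∇e‖ ≤ ε`, `Ṽ = V + e` the biased estimate with `L`-Lipschitz
gradient, `G` an unbiased bounded estimate of `∇V(θ₀)`, and `Θ'` the parameter chosen by
the Lookback rule, satisfying `Ṽ(Θ') ≥ Ṽ(θ₀ + ηG)` almost surely. Then the expected
true value of `Θ'` satisfies the biased descent inequality. -/
theorem biased_descent_step
    {H : Type*} [NormedAddCommGroup H] [InnerProductSpace ℝ H] [FiniteDimensional ℝ H]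
    [MeasurableSpace H] [BorelSpace H]
    (V e : H → ℝ) (hV : Differentiable ℝ V) (he : Differentiable ℝ e)
    (L : ℝ) (hL : 0 ≤ L)
    (hLip : LipschitzWith ⟨L, hL⟩ (gradient (fun θ => V θ + e θ)))
    (ε : ℝ) (hε : 0 ≤ ε)
    (hebdd : ∀ θ, |e θ| ≤ ε) (hgradebdd : ∀ θ, ‖gradient e θ‖ ≤ ε)
    {Ω : Type*} [MeasurableSpace Ω] (μ : Measure Ω) [IsProbabilityMeasure μ]
    (θ₀ : H) (η : ℝ) (hη : 0 ≤ η)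
    (G : Ω → H) (hGmeas : Measurable G)
    (hunbiased : ∫ ω, G ω ∂μ = gradient V θ₀)
    (Gmax : ℝ) (hGbdd : ∀ᵐ ω ∂μ, ‖G ω‖ ≤ Gmax)
    (Θ' : Ω → H) (hΘmeas : Measurable Θ')
    (hVint : Integrable (fun ω => V (Θ' ω)) μ)
    (haccept : ∀ᵐ ω ∂μ, V (Θ' ω) + e (Θ' ω) ≥ V (θ₀ + η • G ω) + e (θ₀ + η • G ω)) :
    ∫ ω, V (Θ' ω) ∂μ
      ≥ V θ₀ + η * ‖gradient V θ₀‖ ^ 2 - L / 2 * η ^ 2 * ∫ ω, ‖G ω‖ ^ 2 ∂μ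
        - 2 * ε - η * ε * ‖gradient V θ₀‖ := by
  exact biased_descent_step_general (hV θ₀) (hV.add he) (fun θ => hLip.norm_sub_le θ θ₀) (hebdd θ₀)
    (.of_forall fun ω => hebdd (Θ' ω)) (hgradebdd θ₀) hη
    (.of_bound hGmeas.aestronglyMeasurable Gmax hGbdd) hunbiased hVint haccept
end

section
/- Let T be a positive natural number, K ≥ 0, M ∈ ℝ, and let v : ℕ → ℝ and a : ℕ → ℝ satisfy a(t) ≥ 0 for all t, v(t) ≤ M for all t ≤ T, and v(t+1) ≥ v(t) + η · a(t) − K · η² for all t < T, where η = 1/√T. Then there exists t < T with √(a(t)) ≤ √(M − v(0) + K) · T^{−1/4}. -/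
open Real

open scoped BigOperators

theorem sum_stepsize_mul_le {R : Type*} [Ring R] [PartialOrder R] [IsOrderedAddMonoid R]
    {n : ℕ} {K : R} {η v a : ℕ → R}
    (hstep : ∀ t < n, v t + η t * a t - K * η t ^ 2 ≤ v (t + 1)) :
    ∑ t ∈ Finset.range n, η t * a t ≤ v n - v 0 + K * ∑ t ∈ Finset.range n, η t ^ 2 := by
  rw [← Finset.sum_range_sub, Finset.mul_sum, ← Finset.sum_add_distrib]
  refine Finset.sum_le_sum fun t ht ↦ ?_
  have hgain : η t * a t - K * η t ^ 2 ≤ v (t + 1) - v t := by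
    simpa only [le_sub_iff_add_le', add_sub_assoc] using hstep t (Finset.mem_range.mp ht)
  exact sub_le_iff_le_add.mp hgain

theorem expect_le_of_const_stepsize
    {𝕜 : Type*} [Field 𝕜] [LinearOrder 𝕜] [IsStrictOrderedRing 𝕜]
    {T : ℕ} {K η : 𝕜} {v a : ℕ → 𝕜} (hT : 0 < T) (hη : 0 < η)
    (hstep : ∀ t < T, v t + η * a t - K * η ^ 2 ≤ v (t + 1)) :
    𝔼 t ∈ Finset.range T, a t ≤ (v T - v 0) / (T * η) + K * η := by
  have hsum : η * ∑ t ∈ Finset.range T, a t ≤ v T - v 0 + K * (T * η ^ 2) := by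
    simpa [← Finset.mul_sum] using sum_stepsize_mul_le hstep
  calc 𝔼 t ∈ Finset.range T, a t
      = (∑ t ∈ Finset.range T, a t) / T := by
        rw [Finset.expect_eq_sum_div_card, Finset.card_range]
    _ = (η * ∑ t ∈ Finset.range T, a t) / (T * η) := by field_simp
    _ ≤ (v T - v 0 + K * (T * η ^ 2)) / (T * η) := by gcongr
    _ = (v T - v 0) / (T * η) + K * η := by field_simp

-- `η = 1 / √T` gives the two terms `(v T - v 0) / (T * η)` and `K * η` the same order in `T`.
theorem expect_le_of_inv_sqrt_stepsize {T : ℕ} {K : ℝ} {v a : ℕ → ℝ} (hT : 0 < T)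
    (hstep : ∀ t < T, v t + 1 / √T * a t - K * (1 / √T) ^ 2 ≤ v (t + 1)) :
    𝔼 t ∈ Finset.range T, a t ≤ (v T - v 0 + K) / √T := by
  have hη : 0 < 1 / √(T : ℝ) := by positivity
  have hTη : (T : ℝ) * (1 / √T) = √T := by rw [mul_one_div, div_sqrt]
  calc 𝔼 t ∈ Finset.range T, a t
      ≤ (v T - v 0) / (T * (1 / √T)) + K * (1 / √T) := expect_le_of_const_stepsize hT hη hstep
    _ = (v T - v 0 + K) / √T := by rw [hTη, mul_one_div, add_div]

theorem rpow_neg_one_fourth_eq_inv_sqrt_sqrt {x : ℝ} (hx : 0 ≤ x) :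
    x ^ (-(1 / 4 : ℝ)) = (√√x)⁻¹ := by
  rw [rpow_neg hx, sqrt_eq_rpow, sqrt_eq_rpow, ← rpow_mul hx]
  norm_num

/-- **Rate extraction for the convergence theorem**: with step size `η = 1/√T`, the
per-step descent inequality yields an iterate `t < T` whose quantity `√(a t)` (the
gradient norm) is at most `√(M − v 0 + K) · T^(−1/4)`. -/
theorem rate_extraction
    (T : ℕ) (hT : 0 < T) (K : ℝ) (hK : 0 ≤ K) (M : ℝ)
    (η : ℝ) (hη : η = 1 / Real.sqrt T)
    (v a : ℕ → ℝ)
    (ha : ∀ t, 0 ≤ a t)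
    (hvM : ∀ t ≤ T, v t ≤ M)
    (hstep : ∀ t < T, v (t + 1) ≥ v t + η * a t - K * η ^ 2) :
    ∃ t < T, Real.sqrt (a t) ≤ Real.sqrt (M - v 0 + K) * (T : ℝ) ^ (-(1 / 4 : ℝ)) := by
  subst hη
  have haverage : 𝔼 t ∈ Finset.range T, a t ≤ (M - v 0 + K) / √T :=
    calc 𝔼 t ∈ Finset.range T, a t
        ≤ (v T - v 0 + K) / √T := expect_le_of_inv_sqrt_stepsize hT hstep
      _ ≤ (M - v 0 + K) / √T := by gcongr; exact hvM T le_rfl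
  obtain ⟨t, ht, hat⟩ :=
    Finset.exists_le_of_expect_le (Finset.nonempty_range_iff.mpr hT.ne') haverage
  refine ⟨t, Finset.mem_range.mp ht, ?_⟩
  calc √(a t) ≤ √((M - v 0 + K) / √T) := sqrt_le_sqrt hat
    _ = √(M - v 0 + K) / √√T := sqrt_div' _ (sqrt_nonneg _)
    _ = √(M - v 0 + K) * (T : ℝ) ^ (-(1 / 4 : ℝ)) := by
      rw [rpow_neg_one_fourth_eq_inv_sqrt_sqrt T.cast_nonneg, div_eq_mul_inv]
end

section
/- Let T be a positive natural number, C ≥ 0, M ∈ ℝ, ε ∈ [0, 1), and let v : ℕ → ℝ and a : ℕ → ℝ satisfy a(t) ≥ 0 for all t, v(t) ≤ M for all t ≤ T, and η · (1 − ε) · min(a(t), a(t)²) ≤ v(t+1) − v(t) + η² · C for all t < T, where η = 1/√T. Then min over t < T of min(a(t), a(t)²) is at most (M − v(0) + C) / ((1 − ε) · √T). -/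
open Real

/-!
The increments of `v` telescope, so one of the first `T` of them is at most the average
`(v T - v 0) / T`. At that index the ascent inequality with step size `η` gives a bound of order
`1 / (η T) + η`; the choice `η = 1 / √T` makes both terms of order `1 / √T`.
-/

section Ascent

variable {K : Type*} [Field K] [LinearOrder K] [IsStrictOrderedRing K] {T : ℕ}

theorem exists_lt_succ_sub_le_average (hT : 0 < T) (v : ℕ → K) :
    ∃ t < T, v (t + 1) - v t ≤ (v T - v 0) / T := by
  have hT' : (T : K) ≠ 0 := Nat.cast_ne_zero.mpr hT.ne'
  have hsum : ∑ t ∈ Finset.range T, (v (t + 1) - v t) ≤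
      ∑ _t ∈ Finset.range T, (v T - v 0) / (T : K) := by
    rw [Finset.sum_range_sub, Finset.sum_const, Finset.card_range, nsmul_eq_mul,
      mul_div_cancel₀ _ hT']
  simpa only [Finset.mem_range] using
    Finset.exists_le_of_sum_le (Finset.nonempty_range_iff.mpr hT.ne') hsum

theorem exists_lt_le_of_ascent_step (hT : 0 < T) {η κ C : K} (hη : 0 < η) (hκ : 0 < κ)
    {v g : ℕ → K} (hstep : ∀ t < T, η * κ * g t ≤ v (t + 1) - v t + η ^ 2 * C) :
    ∃ t < T, g t ≤ (v T - v 0) / (η * κ * T) + η * C / κ := by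
  obtain ⟨t, ht, hincr⟩ := exists_lt_succ_sub_le_average hT v
  refine ⟨t, ht, ?_⟩
  have hT' : (T : K) ≠ 0 := Nat.cast_ne_zero.mpr hT.ne'
  calc
    g t ≤ ((v T - v 0) / T + η ^ 2 * C) / (η * κ) := by
      rw [le_div_iff₀' (mul_pos hη hκ)]
      exact (hstep t ht).trans (by gcongr)
    _ = (v T - v 0) / (η * κ * T) + η * C / κ := by
      field_simp

end Ascent

theorem biased_convergence_rate_general {T : ℕ} (hT : 0 < T) {η κ C M : ℝ}
    (hη : η = 1 / √T) (hκ : 0 < κ) {v g : ℕ → ℝ} (hvM : v T ≤ M)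
    (hstep : ∀ t < T, η * κ * g t ≤ v (t + 1) - v t + η ^ 2 * C) :
    ∃ t < T, g t ≤ (M - v 0 + C) / (κ * √T) := by
  have hsqrt : 0 < √(T : ℝ) := sqrt_pos.mpr (Nat.cast_pos.mpr hT)
  have hηT : η * T = √T := by rw [hη, one_div_mul_eq_div, div_sqrt]
  obtain ⟨t, ht, hg⟩ := exists_lt_le_of_ascent_step hT (hη ▸ one_div_pos.mpr hsqrt) hκ hstep
  refine ⟨t, ht, ?_⟩
  calc
    g t ≤ (v T - v 0) / (η * κ * T) + η * C / κ := hg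
    _ = (v T - v 0 + C) / (κ * √T) := by
      rw [mul_right_comm, hηT, hη]
      field_simp
    _ ≤ (M - v 0 + C) / (κ * √T) := by gcongr

/-- **Convergence with a biased critic (sequence-level argument)**: with step size
`η = 1/√T`, a per-step inequality `η(1−ε)·min(a t, (a t)²) ≤ v(t+1) − v(t) + η²C` and
values bounded above by `M` force some iterate `t < T` to satisfy
`min(a t, (a t)²) ≤ (M − v 0 + C)/((1−ε)√T)`. -/
theorem biased_convergence_rate
    (T : ℕ) (hT : 0 < T) (C : ℝ) (hC : 0 ≤ C) (M : ℝ)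
    (ε : ℝ) (hε0 : 0 ≤ ε) (hε1 : ε < 1)
    (η : ℝ) (hη : η = 1 / Real.sqrt T)
    (v a : ℕ → ℝ)
    (ha : ∀ t, 0 ≤ a t)
    (hvM : ∀ t ≤ T, v t ≤ M)
    (hstep : ∀ t < T, η * (1 - ε) * min (a t) ((a t) ^ 2) ≤ v (t + 1) - v t + η ^ 2 * C) :
    ∃ t < T, min (a t) ((a t) ^ 2) ≤ (M - v 0 + C) / ((1 - ε) * Real.sqrt T) :=
  biased_convergence_rate_general hT hη (sub_pos.mpr hε1) (hvM T le_rfl) hstep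
end
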